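/- arXiv:1102.0748 — 2 statements merged into one kernel-verified Lean document; each statement's English description precedes it below -/
import Mathlib

section
/- For every n ≥ 1, n! = ∑_{π ∈ NC_even(2n)} ∏_{V ∈ π} b_{|V|/2}, where the sum is over all non-crossing partitions π of {1,…,2n} all of whose blocks have even size, and b_m denotes the number of connected parity-reversing pairings on [2m], with b_0 := 1. -/
open scoped Classical

/-- Asymmetric crossing of two chords: `B = {a,b}` with `a < b` starts strictly
before `C = {c,d}` and they interleave: `a < c < b < d`. -/
def CrossAsym (B C : Finset ℕ) : Prop :=
  ∃ a b c d : ℕ, a < c ∧ c < b ∧ b < d ∧ B = {a, b} ∧ C = {c, d}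

/-- Two blocks cross: `a < c < b < d` or `c < a < d < b`. -/
def Crosses (B C : Finset ℕ) : Prop := CrossAsym B C ∨ CrossAsym C B

/-- A pairing on `[2n] = {1, …, 2n}`: a partition of `{1, …, 2n}` into blocks of size 2. -/
def IsPairing (n : ℕ) (π : Finset (Finset ℕ)) : Prop :=
  (∀ B ∈ π, B.card = 2 ∧ B ⊆ Finset.Icc 1 (2 * n)) ∧
  (∀ x ∈ Finset.Icc 1 (2 * n), ∃! B, B ∈ π ∧ x ∈ B)

/-- Number of crossings of a pairing: the number of unordered pairs of blocks that cross
(each crossing unordered pair `{B, C}` satisfies the asymmetric condition exactly once). -/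
noncomputable def crNum (π : Finset (Finset ℕ)) : ℕ :=
  Set.ncard {p : Finset ℕ × Finset ℕ | p.1 ∈ π ∧ p.2 ∈ π ∧ CrossAsym p.1 p.2}

/-- A pairing is parity-reversing if each block consists of one odd and one even number. -/
def ParityReversing (π : Finset (Finset ℕ)) : Prop :=
  ∀ B ∈ π, ∃ a b : ℕ, B = {a, b} ∧ Odd a ∧ Even b

/-- A pairing is connected if its blocks cannot be split into two nonempty families
with no crossing between the families. -/
def ConnectedPairing (π : Finset (Finset ℕ)) : Prop :=
  ¬ ∃ S T : Finset (Finset ℕ), S ∪ T = π ∧ Disjoint S T ∧ S.Nonempty ∧ T.Nonempty ∧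
      ∀ B ∈ S, ∀ C ∈ T, ¬ Crosses B C

/-- `tCount n k`: the number of pairings on `[2n]` with exactly `k` crossings. -/
noncomputable def tCount (n k : ℕ) : ℕ :=
  Set.ncard {π : Finset (Finset ℕ) | IsPairing n π ∧ crNum π = k}

/-- `rCount n k`: the number of parity-reversing pairings on `[2n]` with exactly `k` crossings. -/
noncomputable def rCount (n k : ℕ) : ℕ :=
  Set.ncard {π : Finset (Finset ℕ) | IsPairing n π ∧ ParityReversing π ∧ crNum π = k}

/-- `bCount n k`: the number of connected parity-reversing pairings on `[2n]`
with exactly `k` crossings. -/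
noncomputable def bCount (n k : ℕ) : ℕ :=
  Set.ncard {π : Finset (Finset ℕ) |
    IsPairing n π ∧ ParityReversing π ∧ ConnectedPairing π ∧ crNum π = k}

/-- `bTot n`: the number of connected parity-reversing pairings on `[2n]` (equals 1 for `n = 0`). -/
noncomputable def bTot (n : ℕ) : ℕ :=
  Set.ncard {π : Finset (Finset ℕ) |
    IsPairing n π ∧ ParityReversing π ∧ ConnectedPairing π}

/-- The Touchard alternating sum `∑_{k=-n}^n (-1)^k q^{k(k-1)/2} C(2n, n+k)`. -/
noncomputable def touchardSum (n : ℕ) (q : ℂ) : ℂ :=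
  ∑ k ∈ Finset.Icc (-(n : ℤ)) (n : ℤ),
    (-1 : ℂ) ^ k * q ^ ((k * (k - 1)) / 2).toNat * ((2 * n).choose ((n : ℤ) + k).toNat : ℂ)

/-- `T_n(q) = ∑_k t_{n,k} q^k` as a complex polynomial function
(all crossing numbers of pairings on `[2n]` satisfy `k ≤ n*n`). -/
noncomputable def Tpoly (n : ℕ) (q : ℂ) : ℂ :=
  ∑ k ∈ Finset.range (n * n + 1), (tCount n k : ℂ) * q ^ k

/-- `T_n(q) = ∑_k t_{n,k} q^k` as a real polynomial function. -/
noncomputable def TpolyR (n : ℕ) (q : ℝ) : ℝ :=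
  ∑ k ∈ Finset.range (n * n + 1), (tCount n k : ℝ) * q ^ k

/-- `R_n(q) = ∑_k r_{n,k} q^k` as a real polynomial function. -/
noncomputable def RpolyR (n : ℕ) (q : ℝ) : ℝ :=
  ∑ k ∈ Finset.range (n * n + 1), (rCount n k : ℝ) * q ^ k

/-- Non-crossing partitions of `{1, …, 2n}` all of whose blocks have even size. -/
noncomputable def NCEvenPartitions (n : ℕ) : Finset (Finset (Finset ℕ)) :=
  ((Finset.Icc 1 (2 * n)).powerset.powerset).filter (fun π =>
    (∀ B ∈ π, B.Nonempty ∧ Even B.card) ∧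
    (∀ x ∈ Finset.Icc 1 (2 * n), ∃! B, B ∈ π ∧ x ∈ B) ∧
    ¬ ∃ a b c d : ℕ, a < b ∧ b < c ∧ c < d ∧
        ∃ B ∈ π, ∃ C ∈ π, B ≠ C ∧ a ∈ B ∧ c ∈ B ∧ b ∈ C ∧ d ∈ C)

def PairOn (X : Finset ℕ) (π : Finset (Finset ℕ)) : Prop :=
  (∀ B ∈ π, B.card = 2 ∧ B ⊆ X) ∧ (∀ x ∈ X, ∃! B, B ∈ π ∧ x ∈ B)

noncomputable def PRs (X : Finset ℕ) : Finset (Finset (Finset ℕ)) :=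
  X.powerset.powerset.filter (fun π => PairOn X π ∧ ParityReversing π)

noncomputable def Conn (X : Finset ℕ) : Finset (Finset (Finset ℕ)) :=
  X.powerset.powerset.filter (fun π => PairOn X π ∧ ParityReversing π ∧ ConnectedPairing π)

lemma PairOn.mem_pow {X : Finset ℕ} {π : Finset (Finset ℕ)} (h : PairOn X π) :
    π ∈ X.powerset.powerset := by
  rw [Finset.mem_powerset]
  intro B hB
  rw [Finset.mem_powerset]
  exact (h.1 B hB).2

lemma mem_PRs {X : Finset ℕ} {π : Finset (Finset ℕ)} :
    π ∈ PRs X ↔ PairOn X π ∧ ParityReversing π := by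
  unfold PRs
  rw [Finset.mem_filter]
  exact ⟨fun h => h.2, fun h => ⟨h.1.mem_pow, h⟩⟩

lemma mem_Conn {X : Finset ℕ} {π : Finset (Finset ℕ)} :
    π ∈ Conn X ↔ PairOn X π ∧ ParityReversing π ∧ ConnectedPairing π := by
  unfold Conn
  rw [Finset.mem_filter]
  exact ⟨fun h => h.2, fun h => ⟨h.1.mem_pow, h⟩⟩

lemma bTot_eq (m : ℕ) : bTot m = (Conn (Finset.Icc 1 (2 * m))).card := by
  unfold bTot
  rw [← Set.ncard_coe_finset]
  congr 1
  ext π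
  simp only [Set.mem_ofPred_eq, Finset.mem_coe, mem_Conn]
  rfl

lemma PairOn.eq {X : Finset ℕ} {π : Finset (Finset ℕ)} (h : PairOn X π) {C D : Finset ℕ}
    (hC : C ∈ π) (hD : D ∈ π) {x : ℕ} (hx : x ∈ C) (hx' : x ∈ D) : C = D :=
  (h.2 x ((h.1 C hC).2 hx)).unique ⟨hC, hx⟩ ⟨hD, hx'⟩

lemma PairOn.nonempty {X : Finset ℕ} {π : Finset (Finset ℕ)} (h : PairOn X π) {C : Finset ℕ}
    (hC : C ∈ π) : C.Nonempty := by
  rw [← Finset.card_pos, (h.1 C hC).1]; norm_num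

/-! counting parity reversing pairings -/

def permPair {n : ℕ} (σ : Equiv.Perm (Fin n)) : Finset (Finset ℕ) :=
  Finset.univ.image (fun i : Fin n => ({2 * (i : ℕ) + 1, 2 * (σ i : ℕ) + 2} : Finset ℕ))

lemma permPair_mem {n : ℕ} (σ : Equiv.Perm (Fin n)) :
    permPair σ ∈ PRs (Finset.Icc 1 (2 * n)) := by
  rw [mem_PRs]
  refine ⟨⟨?_, ?_⟩, ?_⟩
  · intro B hB
    simp only [permPair, Finset.mem_image, Finset.mem_univ, true_and] at hB
    obtain ⟨i, rfl⟩ := hB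
    refine ⟨Finset.card_pair (by omega), ?_⟩
    intro x hx
    have := i.2
    have := (σ i).2
    simp only [Finset.mem_insert, Finset.mem_singleton] at hx
    rw [Finset.mem_Icc]
    omega
  · intro x hx
    rw [Finset.mem_Icc] at hx
    have key : ∃ i : Fin n, ∀ j : Fin n, x ∈ ({2 * (j : ℕ) + 1, 2 * (σ j : ℕ) + 2} : Finset ℕ) ↔ j = i := by
      rcases Nat.even_or_odd' x with ⟨k, hk | hk⟩
      · refine ⟨σ.symm ⟨k - 1, by omega⟩, fun j => ?_⟩
        rw [Equiv.eq_symm_apply, Fin.ext_iff]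
        simp only [Finset.mem_insert, Finset.mem_singleton]
        omega
      · refine ⟨⟨k, by omega⟩, fun j => ?_⟩
        rw [Fin.ext_iff]
        simp only [Finset.mem_insert, Finset.mem_singleton]
        omega
    obtain ⟨i, hi⟩ := key
    refine ⟨_, ⟨Finset.mem_image.2 ⟨i, Finset.mem_univ _, rfl⟩, (hi i).2 rfl⟩, ?_⟩
    rintro B ⟨hB, hxB⟩
    simp only [permPair, Finset.mem_image, Finset.mem_univ, true_and] at hB
    obtain ⟨j, rfl⟩ := hB
    rw [(hi j).1 hxB]
  · intro B hB
    simp only [permPair, Finset.mem_image, Finset.mem_univ, true_and] at hB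
    obtain ⟨i, rfl⟩ := hB
    exact ⟨_, _, rfl, ⟨i, rfl⟩, ⟨σ i + 1, by ring⟩⟩

lemma card_PRs (n : ℕ) : (PRs (Finset.Icc 1 (2 * n))).card = n.factorial := by
  have h : (Finset.univ : Finset (Equiv.Perm (Fin n))).card = (PRs (Finset.Icc 1 (2 * n))).card := by
    refine Finset.card_bij (fun σ _ => permPair σ) (fun σ _ => permPair_mem σ) ?_ ?_
    · intro σ _ τ _ h
      ext i
      have : ({2 * (i : ℕ) + 1, 2 * (σ i : ℕ) + 2} : Finset ℕ) ∈ permPair σ :=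
        Finset.mem_image.2 ⟨i, Finset.mem_univ _, rfl⟩
      rw [h] at this
      obtain ⟨j, -, hj⟩ := Finset.mem_image.1 this
      simp only [Finset.ext_iff, Finset.mem_insert, Finset.mem_singleton] at hj
      have h1 := (hj (2 * j + 1)).1 (by simp)
      have h2 := (hj (2 * (τ j) + 2)).1 (by simp)
      have : j = i := by rw [Fin.ext_iff]; omega
      subst this
      omega
    · intro ρ hρ
      rw [mem_PRs] at hρ
      obtain ⟨hp, hpr⟩ := hρ
      have h1 : ∀ i : Fin n, ∃ j : Fin n, ({2 * (i : ℕ) + 1, 2 * (j : ℕ) + 2} : Finset ℕ) ∈ ρ := by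
        intro i
        have := i.2
        obtain ⟨B, ⟨hB, hxB⟩, -⟩ := hp.2 (2 * i + 1) (by rw [Finset.mem_Icc]; omega)
        obtain ⟨a, b, rfl, ⟨k, rfl⟩, ⟨l, rfl⟩⟩ := hpr B hB
        have hb := (hp.1 _ hB).2 (show l + l ∈ _ by simp)
        rw [Finset.mem_Icc] at hb
        simp only [Finset.mem_insert, Finset.mem_singleton] at hxB
        have : k = i := by omega
        subst this
        refine ⟨⟨l - 1, by omega⟩, ?_⟩
        convert hB using 3
        simp only
        omega
      choose s hs using h1
      have hinj : Function.Injective s := by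
        intro i j hij
        have := hp.eq (hs i) (hs j) (x := 2 * (s i : ℕ) + 2) (by simp) (by simp [hij])
        simp only [Finset.ext_iff, Finset.mem_insert, Finset.mem_singleton] at this
        have h3 := (this (2 * i + 1)).1 (by simp)
        rw [Fin.ext_iff]
        omega
      refine ⟨Equiv.ofBijective s (Finite.injective_iff_bijective.1 hinj), Finset.mem_univ _, ?_⟩
      ext B
      simp only [permPair, Finset.mem_image, Finset.mem_univ, true_and, Equiv.ofBijective_apply]
      constructor
      · rintro ⟨i, rfl⟩
        exact hs i
      · intro hB
        obtain ⟨a, b, rfl, ⟨k, rfl⟩, hb⟩ := hpr B hB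
        have ha := (hp.1 _ hB).2 (show 2 * k + 1 ∈ _ by simp)
        rw [Finset.mem_Icc] at ha
        exact ⟨⟨k, by omega⟩, hp.eq (hs _) hB (x := 2 * k + 1) (by simp) (by simp)⟩
  rw [← h, Finset.card_univ, Fintype.card_perm, Fintype.card_fin]

/-! transport -/

lemma CrossAsym.image {X : Finset ℕ} {g : ℕ → ℕ} (hg : StrictMonoOn g X) {B C : Finset ℕ}
    (hB : B ⊆ X) (hC : C ⊆ X) (h : CrossAsym B C) : CrossAsym (B.image g) (C.image g) := by
  obtain ⟨a, b, c, d, h1, h2, h3, rfl, rfl⟩ := h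
  have ha : a ∈ X := hB (by simp)
  have hb : b ∈ X := hB (by simp)
  have hc : c ∈ X := hC (by simp)
  have hd : d ∈ X := hC (by simp)
  refine ⟨g a, g b, g c, g d, hg ha hc h1, hg hc hb h2, hg hb hd h3, ?_, ?_⟩ <;> simp [Finset.image_insert]

lemma Crosses.image {X : Finset ℕ} {g : ℕ → ℕ} (hg : StrictMonoOn g X) {B C : Finset ℕ}
    (hB : B ⊆ X) (hC : C ⊆ X) (h : Crosses B C) : Crosses (B.image g) (C.image g) :=
  h.imp (CrossAsym.image hg hB hC) (CrossAsym.image hg hC hB)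

lemma Conn_image {X : Finset ℕ} {g : ℕ → ℕ} (hg : StrictMonoOn g X)
    (hpar : ∀ x ∈ X, ∀ y ∈ X, (x + g x) % 2 = (y + g y) % 2) {ρ : Finset (Finset ℕ)}
    (hρ : ρ ∈ Conn X) : ρ.image (Finset.image g) ∈ Conn (X.image g) := by
  rw [mem_Conn] at hρ ⊢
  obtain ⟨hp, hpr, hc⟩ := hρ
  refine ⟨⟨?_, ?_⟩, ?_, ?_⟩
  · intro B hB
    obtain ⟨C, hC, rfl⟩ := Finset.mem_image.1 hB
    obtain ⟨h1, h2⟩ := hp.1 C hC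
    refine ⟨?_, Finset.image_subset_image h2⟩
    rw [Finset.card_image_of_injOn (hg.injOn.mono (by exact_mod_cast h2)), h1]
  · intro y hy
    obtain ⟨x, hx, rfl⟩ := Finset.mem_image.1 hy
    obtain ⟨B, ⟨hB, hxB⟩, hu⟩ := hp.2 x hx
    refine ⟨B.image g, ⟨Finset.mem_image_of_mem _ hB, Finset.mem_image_of_mem _ hxB⟩, ?_⟩
    rintro D ⟨hD, hxD⟩
    obtain ⟨C, hC, rfl⟩ := Finset.mem_image.1 hD
    obtain ⟨z, hz, hzx⟩ := Finset.mem_image.1 hxD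
    have : z = x := hg.injOn ((hp.1 C hC).2 hz) hx hzx
    subst this
    rw [hu C ⟨hC, hz⟩]
  · intro B hB
    obtain ⟨C, hC, rfl⟩ := Finset.mem_image.1 hB
    obtain ⟨a, b, rfl, ha, hb⟩ := hpr C hC
    have h := hpar a ((hp.1 _ hC).2 (by simp)) b ((hp.1 _ hC).2 (by simp))
    rw [Nat.odd_iff] at ha
    rw [Nat.even_iff] at hb
    rcases Nat.even_or_odd (g b) with h' | h'
    · refine ⟨g a, g b, by simp [Finset.image_insert], ?_, h'⟩
      rw [Nat.even_iff] at h'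
      rw [Nat.odd_iff]
      omega
    · refine ⟨g b, g a, by simp [Finset.image_insert, Finset.pair_comm], h', ?_⟩
      rw [Nat.odd_iff] at h'
      rw [Nat.even_iff]
      omega
  · rintro ⟨S, T, hST, hdis, hS, hT, hcr⟩
    apply hc
    refine ⟨ρ.filter (fun B => B.image g ∈ S), ρ.filter (fun B => B.image g ∈ T), ?_, ?_, ?_, ?_, ?_⟩
    · ext B
      simp only [Finset.mem_union, Finset.mem_filter]
      constructor
      · rintro (h | h) <;> exact h.1
      · intro h
        have : B.image g ∈ S ∪ T := by rw [hST]; exact Finset.mem_image_of_mem _ h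
        rcases Finset.mem_union.1 this with h' | h'
        · exact Or.inl ⟨h, h'⟩
        · exact Or.inr ⟨h, h'⟩
    · rw [Finset.disjoint_left] at hdis ⊢
      intro B hB hB'
      exact hdis (Finset.mem_filter.1 hB).2 (Finset.mem_filter.1 hB').2
    · obtain ⟨B, hB⟩ := hS
      have : B ∈ S ∪ T := Finset.mem_union_left _ hB
      rw [hST] at this
      obtain ⟨C, hC, rfl⟩ := Finset.mem_image.1 this
      exact ⟨C, Finset.mem_filter.2 ⟨hC, hB⟩⟩
    · obtain ⟨B, hB⟩ := hT
      have : B ∈ S ∪ T := Finset.mem_union_right _ hB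
      rw [hST] at this
      obtain ⟨C, hC, rfl⟩ := Finset.mem_image.1 this
      exact ⟨C, Finset.mem_filter.2 ⟨hC, hB⟩⟩
    · intro B hB C hC h
      rw [Finset.mem_filter] at hB hC
      exact hcr _ hB.2 _ hC.2 (h.image hg (hp.1 _ hB.1).2 (hp.1 _ hC.1).2)

lemma image_image_id {X : Finset ℕ} {g k : ℕ → ℕ} (hk : ∀ x ∈ X, k (g x) = x)
    {ρ : Finset (Finset ℕ)} (h : ∀ B ∈ ρ, B ⊆ X) :
    (ρ.image (Finset.image g)).image (Finset.image k) = ρ := by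
  rw [Finset.image_image]
  conv_rhs => rw [← Finset.image_id (s := ρ)]
  apply Finset.image_congr
  intro B hB
  simp only [Function.comp, id, Finset.image_image]
  conv_rhs => rw [← Finset.image_id (s := B)]
  apply Finset.image_congr
  intro x hx
  exact hk x (h B hB hx)

lemma Conn_card_le {X : Finset ℕ} {g : ℕ → ℕ} (hg : StrictMonoOn g X)
    (hpar : ∀ x ∈ X, ∀ y ∈ X, (x + g x) % 2 = (y + g y) % 2)
    {k : ℕ → ℕ} (hk : ∀ x ∈ X, k (g x) = x) :
    (Conn X).card ≤ (Conn (X.image g)).card := by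
  refine Finset.card_le_card_of_injOn (fun ρ => ρ.image (Finset.image g))
    (fun ρ hρ => Conn_image hg hpar hρ) ?_
  intro ρ hρ τ hτ h
  simp only at h
  have h1 := image_image_id hk (ρ := ρ) (fun B hB => ((mem_Conn.1 hρ).1.1 B hB).2)
  have h2 := image_image_id hk (ρ := τ) (fun B hB => ((mem_Conn.1 hτ).1.1 B hB).2)
  rw [← h1, h, h2]

lemma Conn_card_eq {X : Finset ℕ} {g : ℕ → ℕ} (hg : StrictMonoOn g X)
    (hpar : ∀ x ∈ X, ∀ y ∈ X, (x + g x) % 2 = (y + g y) % 2) :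
    (Conn X).card = (Conn (X.image g)).card := by
  have hk : ∀ x ∈ X, Function.invFunOn g X (g x) = x :=
    fun x hx => hg.injOn.leftInvOn_invFunOn hx
  set k := Function.invFunOn g (X : Set ℕ) with hkdef
  apply le_antisymm (Conn_card_le hg hpar hk)
  have hX : (X.image g).image k = X := by
    rw [Finset.image_image]
    conv_rhs => rw [← Finset.image_id (s := X)]
    exact Finset.image_congr (fun x hx => hk x hx)
  have := Conn_card_le (X := X.image g) (g := k) ?_ ?_ (k := g) ?_
  · rwa [hX] at this
  · intro a ha b hb hab
    obtain ⟨x, hx, rfl⟩ := Finset.mem_image.1 (Finset.mem_coe.1 ha)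
    obtain ⟨y, hy, rfl⟩ := Finset.mem_image.1 (Finset.mem_coe.1 hb)
    rw [hk x hx, hk y hy]
    exact (hg.lt_iff_lt hx hy).1 hab
  · intro a ha b hb
    obtain ⟨x, hx, rfl⟩ := Finset.mem_image.1 ha
    obtain ⟨y, hy, rfl⟩ := Finset.mem_image.1 hb
    rw [hk x hx, hk y hy]
    have := hpar x hx y hy
    omega
  · intro a ha
    obtain ⟨x, hx, rfl⟩ := Finset.mem_image.1 ha
    rw [hk x hx]

noncomputable def rk (X : Finset ℕ) (x : ℕ) : ℕ := (X.filter (· ≤ x)).card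

lemma rk_strictMono (X : Finset ℕ) : StrictMonoOn (rk X) X := by
  intro a ha b hb hab
  apply Finset.card_lt_card
  rw [Finset.ssubset_iff_of_subset]
  · refine ⟨b, Finset.mem_filter.2 ⟨hb, le_rfl⟩, ?_⟩
    simp only [Finset.mem_filter, not_and]
    omega
  · intro x hx
    rw [Finset.mem_filter] at hx ⊢
    exact ⟨hx.1, by omega⟩

lemma rk_image (X : Finset ℕ) : X.image (rk X) = Finset.Icc 1 X.card := by
  apply Finset.eq_of_subset_of_card_le
  · intro y hy
    obtain ⟨x, hx, rfl⟩ := Finset.mem_image.1 hy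
    rw [Finset.mem_Icc]
    refine ⟨Finset.card_pos.2 ⟨x, Finset.mem_filter.2 ⟨hx, le_rfl⟩⟩, Finset.card_filter_le _ _⟩
  · rw [Finset.card_image_of_injOn (rk_strictMono X).injOn]
    simp

def NC (π : Finset (Finset ℕ)) : Prop :=
  ¬ ∃ a b c d : ℕ, a < b ∧ b < c ∧ c < d ∧
        ∃ B ∈ π, ∃ C ∈ π, B ≠ C ∧ a ∈ B ∧ c ∈ B ∧ b ∈ C ∧ d ∈ C

lemma mem_NCE {n : ℕ} {π : Finset (Finset ℕ)} : π ∈ NCEvenPartitions n ↔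
    (∀ B ∈ π, B ⊆ Finset.Icc 1 (2 * n)) ∧ (∀ B ∈ π, B.Nonempty ∧ Even B.card) ∧
    (∀ x ∈ Finset.Icc 1 (2 * n), ∃! B, B ∈ π ∧ x ∈ B) ∧ NC π := by
  unfold NCEvenPartitions NC
  simp only [Finset.mem_filter]
  rw [Finset.mem_powerset]
  refine and_congr ⟨fun h B hB => Finset.mem_powerset.1 (h hB),
    fun h B hB => Finset.mem_powerset.2 (h B hB)⟩ Iff.rfl

lemma gap_even {n : ℕ} {π : Finset (Finset ℕ)} (hπ : π ∈ NCEvenPartitions n) {B : Finset ℕ}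
    (hB : B ∈ π) {x y : ℕ} (hx : x ∈ B) (hy : y ∈ B) :
    Even (((Finset.Ioo x y) \ B).card) := by
  obtain ⟨hsub, hev, huniq, hnc⟩ := mem_NCE.1 hπ
  have hd : ((Finset.Ioo x y) \ B) = (π.erase B).biUnion (fun C => C ∩ Finset.Ioo x y) := by
    ext z
    simp only [Finset.mem_sdiff, Finset.mem_biUnion, Finset.mem_inter, Finset.mem_erase]
    constructor
    · rintro ⟨hz, hzB⟩
      have h1 := hsub B hB hx
      have h2 := hsub B hB hy
      have hz' := hz
      rw [Finset.mem_Icc] at h1 h2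
      rw [Finset.mem_Ioo] at hz
      obtain ⟨C, ⟨hC, hzC⟩, -⟩ := huniq z (by rw [Finset.mem_Icc]; omega)
      exact ⟨C, ⟨fun h => hzB (h ▸ hzC), hC⟩, hzC, hz'⟩
    · rintro ⟨C, ⟨hCB, hC⟩, hzC, hz⟩
      exact ⟨hz, fun hzB => hCB ((huniq z (hsub B hB hzB)).unique ⟨hC, hzC⟩ ⟨hB, hzB⟩)⟩
  rw [hd, Finset.card_biUnion]
  · apply Finset.even_sum
    intro C hC
    rw [Finset.mem_erase] at hC
    by_cases he : (C ∩ Finset.Ioo x y) = ∅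
    · rw [he]; simp
    · have : C ∩ Finset.Ioo x y = C := by
        rw [Finset.inter_eq_left]
        obtain ⟨z, hz⟩ := Finset.nonempty_iff_ne_empty.2 he
        rw [Finset.mem_inter, Finset.mem_Ioo] at hz
        intro w hw
        rw [Finset.mem_Ioo]
        have hne : ∀ v ∈ B, w ≠ v := by
          rintro v hv rfl
          exact hC.1 ((huniq w (hsub B hB hv)).unique ⟨hC.2, hw⟩ ⟨hB, hv⟩)
        have n1 := hne x hx
        have n2 := hne y hy
        by_contra hcon
        rcases lt_or_ge w x with h | h
        · exact hnc ⟨w, x, z, y, h, hz.2.1, hz.2.2, C, hC.2, B, hB, hC.1, hw, hz.1, hx, hy⟩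
        · exact hnc ⟨x, z, y, w, hz.2.1, hz.2.2, by omega, B, hB, C, hC.2, hC.1.symm, hx, hy, hz.1, hw⟩
      rw [this]
      exact (hev C hC.2).2
  · intro C hC D hD hCD
    rw [Finset.mem_coe, Finset.mem_erase] at hC hD
    rw [Function.onFun, Finset.disjoint_left]
    intro z hz hz'
    rw [Finset.mem_inter] at hz hz'
    exact hCD ((huniq z (hsub C hC.2 hz.1)).unique ⟨hC.2, hz.1⟩ ⟨hD.2, hz'.1⟩)

lemma rk_par_aux {n : ℕ} {π : Finset (Finset ℕ)} (hπ : π ∈ NCEvenPartitions n) {B : Finset ℕ}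
    (hB : B ∈ π) {x y : ℕ} (hx : x ∈ B) (hy : y ∈ B) (hxy : x < y) :
    (x + rk B x) % 2 = (y + rk B y) % 2 := by
  have h1 := gap_even hπ hB hx hy
  have h2 : rk B y = rk B x + (Finset.Ioo x y ∩ B).card + 1 := by
    have : B.filter (· ≤ y) = (B.filter (· ≤ x) ∪ (Finset.Ioo x y ∩ B)) ∪ {y} := by
      ext z
      simp only [Finset.mem_filter, Finset.mem_union, Finset.mem_inter, Finset.mem_Ioo,
        Finset.mem_singleton]
      constructor
      · rintro ⟨h1, h2⟩
        simp only [h1]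
        simp
        omega
      · rintro ((h | h) | h)
        · exact ⟨h.1, by omega⟩
        · exact ⟨h.2, by omega⟩
        · subst h; exact ⟨hy, le_rfl⟩
    unfold rk
    rw [this, Finset.card_union_of_disjoint, Finset.card_union_of_disjoint, Finset.card_singleton]
    · rw [Finset.disjoint_left]
      intro z hz hz'
      simp only [Finset.mem_filter, Finset.mem_inter, Finset.mem_Ioo] at hz hz'
      omega
    · rw [Finset.disjoint_left]
      intro z hz hz'
      simp only [Finset.mem_filter, Finset.mem_inter, Finset.mem_Ioo, Finset.mem_union,
        Finset.mem_singleton] at hz hz'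
      omega
  have h3 := Finset.card_sdiff_add_card_inter (Finset.Ioo x y) B
  rw [Nat.card_Ioo] at h3
  obtain ⟨r, hr⟩ := h1
  omega

lemma Conn_card {n : ℕ} {π : Finset (Finset ℕ)} (hπ : π ∈ NCEvenPartitions n) {B : Finset ℕ}
    (hB : B ∈ π) : (Conn B).card = bTot (B.card / 2) := by
  rw [bTot_eq, Conn_card_eq (rk_strictMono B), rk_image]
  · obtain ⟨r, hr⟩ := ((mem_NCE.1 hπ).2.1 B hB).2
    congr 3
    omega
  · intro x hx y hy
    rcases lt_trichotomy x y with h | h | h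
    · exact rk_par_aux hπ hB hx hy h
    · rw [h]
    · exact (rk_par_aux hπ hB hy hx h).symm

/-! components -/

lemma Crosses.symm {B C : Finset ℕ} (h : Crosses B C) : Crosses C B := Or.symm h

def CRel (ρ : Finset (Finset ℕ)) : Finset ℕ → Finset ℕ → Prop :=
  Relation.ReflTransGen (fun C D => C ∈ ρ ∧ D ∈ ρ ∧ Crosses C D)

lemma CRel.trans {ρ : Finset (Finset ℕ)} {C D E : Finset ℕ} (h : CRel ρ C D) (h' : CRel ρ D E) :
    CRel ρ C E := Relation.ReflTransGen.trans h h'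

lemma CRel.tail {ρ : Finset (Finset ℕ)} {C D E : Finset ℕ} (h : CRel ρ C D)
    (h' : D ∈ ρ ∧ E ∈ ρ ∧ Crosses D E) : CRel ρ C E := Relation.ReflTransGen.tail h h'

lemma CRel.symm {ρ : Finset (Finset ℕ)} {C D : Finset ℕ} (h : CRel ρ C D) : CRel ρ D C := by
  induction h with
  | refl => exact Relation.ReflTransGen.refl
  | tail h1 h2 ih => exact Relation.ReflTransGen.head ⟨h2.2.1, h2.1, h2.2.2.symm⟩ ih

noncomputable def compo (ρ : Finset (Finset ℕ)) (C : Finset ℕ) : Finset (Finset ℕ) :=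
  ρ.filter (fun D => CRel ρ C D)

noncomputable def supp (ρ : Finset (Finset ℕ)) (C : Finset ℕ) : Finset ℕ :=
  (compo ρ C).biUnion id

noncomputable def comps (ρ : Finset (Finset ℕ)) : Finset (Finset ℕ) := ρ.image (supp ρ)

lemma mem_compo {ρ : Finset (Finset ℕ)} {C D : Finset ℕ} :
    D ∈ compo ρ C ↔ D ∈ ρ ∧ CRel ρ C D := by
  unfold compo
  rw [Finset.mem_filter]

lemma mem_supp {ρ : Finset (Finset ℕ)} {C : Finset ℕ} {x : ℕ} :
    x ∈ supp ρ C ↔ ∃ D ∈ ρ, CRel ρ C D ∧ x ∈ D := by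
  unfold supp
  simp only [Finset.mem_biUnion, mem_compo, id, and_assoc]

lemma compo_congr {ρ : Finset (Finset ℕ)} {C D : Finset ℕ} (h : CRel ρ C D) :
    compo ρ C = compo ρ D := by
  ext E
  rw [mem_compo, mem_compo]
  exact and_congr_right fun _ => ⟨fun h' => h.symm.trans h', fun h' => h.trans h'⟩

lemma supp_congr {ρ : Finset (Finset ℕ)} {C D : Finset ℕ} (h : CRel ρ C D) :
    supp ρ C = supp ρ D := by
  unfold supp; rw [compo_congr h]

lemma pair_mem {a b x : ℕ} : x ∈ ({a, b} : Finset ℕ) ↔ x = a ∨ x = b := by simp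

lemma not_asym_sep {p q : ℕ} {C D : Finset ℕ} (hC : ∀ x ∈ C, p < x ∧ x < q)
    (hD : ∀ x ∈ D, ¬ (p < x ∧ x < q)) (h : Crosses C D) : False := by
  rcases h with ⟨a, b, c, d, h1, h2, h3, rfl, rfl⟩ | ⟨a, b, c, d, h1, h2, h3, rfl, rfl⟩
  · have := hC a (by simp)
    have := hC b (by simp)
    have := hD c (by simp)
    omega
  · have := hC c (by simp)
    have := hC d (by simp)
    have := hD b (by simp)
    omega

lemma CRel_side {ρ : Finset (Finset ℕ)} {p q : ℕ} {C D : Finset ℕ} (h : CRel ρ C D)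
    (hs : ∀ E ∈ ρ, CRel ρ C E → (∀ x ∈ E, p < x ∧ x < q) ∨ (∀ x ∈ E, ¬ (p < x ∧ x < q)))
    (hC : ∀ x ∈ C, p < x ∧ x < q) : ∀ x ∈ D, p < x ∧ x < q := by
  induction h with
  | refl => exact hC
  | tail h1 h2 ih =>
    rcases hs _ h2.2.1 (h1.tail h2) with h | h
    · exact h
    · exact (not_asym_sep ih h h2.2.2).elim

/-- a pair not crossing and disjoint from `{x, y}` lies on one side -/
lemma side_of_not_cross {x y : ℕ} (hxy : x < y) {C : Finset ℕ} (hC : C.card = 2)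
    (hx : x ∉ C) (hy : y ∉ C) (h : ¬ Crosses {x, y} C) :
    (∀ z ∈ C, x < z ∧ z < y) ∨ (∀ z ∈ C, ¬ (x < z ∧ z < y)) := by
  obtain ⟨u, v, huv, rfl⟩ := Finset.card_eq_two.1 hC
  wlog hlt : u < v generalizing u v
  · have := this v u huv.symm (by rwa [Finset.pair_comm]) (by rwa [Finset.pair_comm])
      (by rwa [Finset.pair_comm]) (by rwa [Finset.pair_comm v u]) (by omega)
    rwa [Finset.pair_comm] at this
  simp only [pair_mem, not_or] at hx hy
  simp only [pair_mem, forall_eq_or_imp, forall_eq]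
  by_contra hcon
  apply h
  by_cases h1 : x < u
  · left
    exact ⟨x, y, u, v, h1, by omega, by omega, rfl, rfl⟩
  · right
    exact ⟨u, v, x, y, by omega, by omega, by omega, rfl, rfl⟩

lemma CRel_of_common {X : Finset ℕ} {ρ : Finset (Finset ℕ)} (hp : PairOn X ρ) {C D : Finset ℕ}
    {x : ℕ} (hC : x ∈ supp ρ C) (hD : x ∈ supp ρ D) : CRel ρ C D := by
  obtain ⟨E, hE, hr, hx⟩ := mem_supp.1 hC
  obtain ⟨F, hF, hr', hx'⟩ := mem_supp.1 hD
  obtain rfl := hp.eq hE hF hx hx'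
  exact hr.trans hr'.symm

/-- two points of one component are on the same side of any chord outside the component -/
lemma same_side {X : Finset ℕ} {ρ : Finset (Finset ℕ)} (hp : PairOn X ρ) {C E : Finset ℕ}
    (hE : E ∈ ρ) (hCE : ¬ CRel ρ C E) {x y : ℕ} (hxy : x < y) (hEq : E = {x, y}) {a c : ℕ}
    (ha : a ∈ supp ρ C) (hc : c ∈ supp ρ C) (hin : x < a ∧ a < y) : x < c ∧ c < y := by
  obtain ⟨A, hA, hrA, haA⟩ := mem_supp.1 ha
  obtain ⟨B, hB, hrB, hcB⟩ := mem_supp.1 hc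
  have hs : ∀ F ∈ ρ, CRel ρ A F → (∀ z ∈ F, x < z ∧ z < y) ∨ (∀ z ∈ F, ¬ (x < z ∧ z < y)) := by
    intro F hF hr
    have hne : F ≠ E := by
      rintro rfl
      exact hCE (hrA.trans hr)
    apply side_of_not_cross hxy (hp.1 F hF).1
    · intro h
      exact hne (hp.eq hF hE h (by rw [hEq]; simp))
    · intro h
      exact hne (hp.eq hF hE h (by rw [hEq]; simp))
    · intro h
      rw [← hEq] at h
      exact hCE ((hrA.trans hr).tail ⟨hF, hE, h.symm⟩)
  have hAin : ∀ z ∈ A, x < z ∧ z < y := by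
    rcases hs A hA Relation.ReflTransGen.refl with h | h
    · exact h
    · exact (h a haA hin).elim
  exact CRel_side (hrA.symm.trans hrB) hs hAin c hcB

lemma comps_NC {X : Finset ℕ} {ρ : Finset (Finset ℕ)} (hp : PairOn X ρ) : NC (comps ρ) := by
  rintro ⟨a, b, c, d, hab, hbc, hcd, V, hV, W, hW, hVW, haV, hcV, hbW, hdW⟩
  obtain ⟨C, hC, rfl⟩ := Finset.mem_image.1 hV
  obtain ⟨D, hD, rfl⟩ := Finset.mem_image.1 hW
  have hCD : ¬ CRel ρ C D := fun h => hVW (supp_congr h)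
  obtain ⟨E, hE, hDE, hbE⟩ := mem_supp.1 hbW
  obtain ⟨F, hF, hDF, hdF⟩ := mem_supp.1 hdW
  have hs : ∀ G ∈ ρ, CRel ρ E G → (∀ z ∈ G, a < z ∧ z < c) ∨ (∀ z ∈ G, ¬ (a < z ∧ z < c)) := by
    intro G hG hr
    have hCG : ¬ CRel ρ C G := fun h => hCD (h.trans (hDE.trans hr).symm)
    obtain ⟨u, v, huv, hGe⟩ := Finset.card_eq_two.1 (hp.1 G hG).1
    wlog hlt : u < v generalizing u v
    · exact this v u huv.symm (by rw [hGe, Finset.pair_comm]) (by omega)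
    have e1 := same_side hp hG hCG hlt hGe haV hcV
    have e2 := same_side hp hG hCG hlt hGe hcV haV
    have hna : ∀ z ∈ supp ρ C, z ≠ u ∧ z ≠ v := by
      intro z hz
      obtain ⟨H, hH, hr', hzH⟩ := mem_supp.1 hz
      constructor
      · rintro rfl
        exact hCG (hp.eq hH hG hzH (by rw [hGe]; simp) ▸ hr')
      · rintro rfl
        exact hCG (hp.eq hH hG hzH (by rw [hGe]; simp) ▸ hr')
    have n1 := hna a haV
    have n2 := hna c hcV
    rw [hGe]
    simp only [pair_mem, forall_eq_or_imp, forall_eq]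
    omega
  have hEin : ∀ z ∈ E, a < z ∧ z < c := by
    rcases hs E hE Relation.ReflTransGen.refl with h | h
    · exact h
    · exact (h b hbE ⟨hab, hbc⟩).elim
  have := CRel_side (hDE.symm.trans hDF) hs hEin d hdF
  omega

lemma comps_mem {n : ℕ} {ρ : Finset (Finset ℕ)} (hp : PairOn (Finset.Icc 1 (2 * n)) ρ) :
    comps ρ ∈ NCEvenPartitions n := by
  rw [mem_NCE]
  refine ⟨?_, ?_, ?_, comps_NC hp⟩
  · intro V hV
    obtain ⟨C, hC, rfl⟩ := Finset.mem_image.1 hV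
    intro x hx
    obtain ⟨D, hD, -, hxD⟩ := mem_supp.1 hx
    exact (hp.1 D hD).2 hxD
  · intro V hV
    obtain ⟨C, hC, rfl⟩ := Finset.mem_image.1 hV
    constructor
    · obtain ⟨x, hx⟩ := hp.nonempty hC
      exact ⟨x, mem_supp.2 ⟨C, hC, Relation.ReflTransGen.refl, hx⟩⟩
    · unfold supp
      rw [Finset.card_biUnion]
      · apply Finset.even_sum
        intro D hD
        rw [id, (hp.1 D (mem_compo.1 hD).1).1]
        exact even_two
      · intro D hD E hE hDE
        rw [Function.onFun, Finset.disjoint_left]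
        intro z hz hz'
        exact hDE (hp.eq (mem_compo.1 hD).1 (mem_compo.1 hE).1 hz hz')
  · intro x hx
    obtain ⟨B, ⟨hB, hxB⟩, -⟩ := hp.2 x hx
    have hxs : x ∈ supp ρ B := mem_supp.2 ⟨B, hB, Relation.ReflTransGen.refl, hxB⟩
    refine ⟨supp ρ B, ⟨Finset.mem_image_of_mem _ hB, hxs⟩, ?_⟩
    rintro V ⟨hV, hxV⟩
    obtain ⟨C, hC, rfl⟩ := Finset.mem_image.1 hV
    exact supp_congr (CRel_of_common hp hxV hxs)

lemma compo_eq_filter {X : Finset ℕ} {ρ : Finset (Finset ℕ)} (hp : PairOn X ρ) {C : Finset ℕ} :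
    ρ.filter (fun D => D ⊆ supp ρ C) = compo ρ C := by
  ext D
  rw [mem_compo, Finset.mem_filter]
  refine and_congr_right fun hD => ⟨fun h => ?_, fun h x hx => mem_supp.2 ⟨D, hD, h, hx⟩⟩
  obtain ⟨x, hx⟩ := hp.nonempty hD
  exact CRel_of_common hp (h hx) (mem_supp.2 ⟨D, hD, Relation.ReflTransGen.refl, hx⟩)

lemma compo_Conn {X : Finset ℕ} {ρ : Finset (Finset ℕ)} (hp : PairOn X ρ) (hpr : ParityReversing ρ)
    {C : Finset ℕ} (hC : C ∈ ρ) : compo ρ C ∈ Conn (supp ρ C) := by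
  rw [mem_Conn]
  refine ⟨⟨?_, ?_⟩, ?_, ?_⟩
  · intro D hD
    rw [mem_compo] at hD
    exact ⟨(hp.1 D hD.1).1, fun x hx => mem_supp.2 ⟨D, hD.1, hD.2, hx⟩⟩
  · intro x hx
    obtain ⟨D, hD, hr, hxD⟩ := mem_supp.1 hx
    refine ⟨D, ⟨mem_compo.2 ⟨hD, hr⟩, hxD⟩, ?_⟩
    rintro E ⟨hE, hxE⟩
    exact hp.eq (mem_compo.1 hE).1 hD hxE hxD
  · intro D hD
    exact hpr D (mem_compo.1 hD).1
  · have main : ∀ S T : Finset (Finset ℕ), S ∪ T = compo ρ C → Disjoint S T → T.Nonempty →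
        C ∈ S → (∀ B ∈ S, ∀ D ∈ T, ¬ Crosses B D) → False := by
      intro S T hST hdis hT hCS hcr
      have hall : ∀ D, CRel ρ C D → D ∈ S := by
        intro D hD
        induction hD with
        | refl => exact hCS
        | tail h1 h2 ih =>
          rename_i E F
          have : F ∈ S ∪ T := by
            rw [hST, mem_compo]
            exact ⟨h2.2.1, h1.tail h2⟩
          rcases Finset.mem_union.1 this with h | h
          · exact h
          · exact (hcr _ ih _ h h2.2.2).elim
      obtain ⟨D, hD⟩ := hT
      have : D ∈ S ∪ T := Finset.mem_union_right _ hD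
      rw [hST, mem_compo] at this
      exact Finset.disjoint_left.1 hdis (hall D this.2) hD
    rintro ⟨S, T, hST, hdis, hS, hT, hcr⟩
    have : C ∈ S ∪ T := by rw [hST, mem_compo]; exact ⟨hC, Relation.ReflTransGen.refl⟩
    rcases Finset.mem_union.1 this with h | h
    · exact main S T hST hdis hT h hcr
    · exact main T S (by rw [Finset.union_comm, hST]) hdis.symm hS h
        (fun B hB D hD hc => hcr D hD B hB hc.symm)

/-! gluing -/

def glue (π : Finset (Finset ℕ)) (f : ∀ B ∈ π, Finset (Finset ℕ)) : Finset (Finset ℕ) :=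
  π.attach.biUnion (fun B => f B.1 B.2)

lemma mem_glue {π : Finset (Finset ℕ)} {f : ∀ B ∈ π, Finset (Finset ℕ)} {C : Finset ℕ} :
    C ∈ glue π f ↔ ∃ B, ∃ h : B ∈ π, C ∈ f B h := by
  simp [glue]

lemma glue_PRs {n : ℕ} {π : Finset (Finset ℕ)} (hπ : π ∈ NCEvenPartitions n)
    {f : ∀ B ∈ π, Finset (Finset ℕ)} (hf : ∀ B h, f B h ∈ Conn B) :
    glue π f ∈ PRs (Finset.Icc 1 (2 * n)) := by
  obtain ⟨hsub, hev, huniq, hnc⟩ := mem_NCE.1 hπ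
  rw [mem_PRs]
  refine ⟨⟨?_, ?_⟩, ?_⟩
  · intro C hC
    obtain ⟨B, hB, hC⟩ := mem_glue.1 hC
    have := (mem_Conn.1 (hf B hB)).1.1 C hC
    exact ⟨this.1, this.2.trans (hsub B hB)⟩
  · intro x hx
    obtain ⟨B, ⟨hB, hxB⟩, hu⟩ := huniq x hx
    obtain ⟨C, ⟨hC, hxC⟩, hu'⟩ := (mem_Conn.1 (hf B hB)).1.2 x hxB
    refine ⟨C, ⟨mem_glue.2 ⟨B, hB, hC⟩, hxC⟩, ?_⟩
    rintro D ⟨hD, hxD⟩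
    obtain ⟨B', hB', hD⟩ := mem_glue.1 hD
    obtain rfl := hu B' ⟨hB', ((mem_Conn.1 (hf B' hB')).1.1 D hD).2 hxD⟩
    exact hu' D ⟨hD, hxD⟩
  · intro C hC
    obtain ⟨B, hB, hC⟩ := mem_glue.1 hC
    exact (mem_Conn.1 (hf B hB)).2.1 C hC

lemma NC_not_cross {π : Finset (Finset ℕ)} (hnc : NC π) {B B' C C' : Finset ℕ} (hB : B ∈ π)
    (hB' : B' ∈ π) (hne : B ≠ B') (hC : C ⊆ B) (hC' : C' ⊆ B') : ¬ Crosses C C' := by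
  rintro (⟨a, b, c, d, h1, h2, h3, rfl, rfl⟩ | ⟨a, b, c, d, h1, h2, h3, rfl, rfl⟩)
  · exact hnc ⟨a, c, b, d, h1, h2, h3, B, hB, B', hB', hne, hC (by simp), hC (by simp),
      hC' (by simp), hC' (by simp)⟩
  · exact hnc ⟨a, c, b, d, h1, h2, h3, B', hB', B, hB, hne.symm, hC' (by simp), hC' (by simp),
      hC (by simp), hC (by simp)⟩

lemma compo_glue {n : ℕ} {π : Finset (Finset ℕ)} (hπ : π ∈ NCEvenPartitions n)
    {f : ∀ B ∈ π, Finset (Finset ℕ)} (hf : ∀ B h, f B h ∈ Conn B) {B C : Finset ℕ} (hB : B ∈ π)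
    (hC : C ∈ f B hB) : compo (glue π f) C = f B hB := by
  obtain ⟨hsub, hev, huniq, hnc⟩ := mem_NCE.1 hπ
  have h1 : ∀ D, CRel (glue π f) C D → D ∈ f B hB := by
    intro D hD
    induction hD with
    | refl => exact hC
    | tail h1 h2 ih =>
      rename_i E F
      obtain ⟨B', hB', hF⟩ := mem_glue.1 h2.2.1
      by_cases hne : B = B'
      · subst hne; exact hF
      · exact (NC_not_cross hnc hB hB' hne ((mem_Conn.1 (hf B hB)).1.1 E ih).2
          ((mem_Conn.1 (hf B' hB')).1.1 F hF).2 h2.2.2).elim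
  have hsub' : compo (glue π f) C ⊆ f B hB := fun D hD => h1 D (mem_compo.1 hD).2
  by_contra hcon
  apply (mem_Conn.1 (hf B hB)).2.2
  refine ⟨compo (glue π f) C, f B hB \ compo (glue π f) C, ?_, ?_, ?_, ?_, ?_⟩
  · exact Finset.union_sdiff_of_subset hsub'
  · exact Finset.disjoint_sdiff
  · exact ⟨C, mem_compo.2 ⟨mem_glue.2 ⟨B, hB, hC⟩, Relation.ReflTransGen.refl⟩⟩
  · rw [Finset.sdiff_nonempty]
    exact fun h => hcon (hsub'.antisymm h)
  · intro D hD E hE hcr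
    rw [Finset.mem_sdiff] at hE
    rw [mem_compo] at hD
    have hEg : E ∈ glue π f := mem_glue.2 ⟨B, hB, hE.1⟩
    exact hE.2 (mem_compo.2 ⟨hEg, hD.2.tail ⟨hD.1, hEg, hcr⟩⟩)

lemma Conn_union {X : Finset ℕ} {ρ : Finset (Finset ℕ)} (h : ρ ∈ Conn X) : ρ.biUnion id = X := by
  have hp := (mem_Conn.1 h).1
  ext x
  simp only [Finset.mem_biUnion, id]
  constructor
  · rintro ⟨B, hB, hx⟩
    exact (hp.1 B hB).2 hx
  · intro hx
    obtain ⟨B, hB, -⟩ := hp.2 x hx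
    exact ⟨B, hB⟩

lemma supp_glue {n : ℕ} {π : Finset (Finset ℕ)} (hπ : π ∈ NCEvenPartitions n)
    {f : ∀ B ∈ π, Finset (Finset ℕ)} (hf : ∀ B h, f B h ∈ Conn B) {B C : Finset ℕ} (hB : B ∈ π)
    (hC : C ∈ f B hB) : supp (glue π f) C = B := by
  unfold supp
  rw [compo_glue hπ hf hB hC, Conn_union (hf B hB)]

lemma exists_mem_f {n : ℕ} {π : Finset (Finset ℕ)} (hπ : π ∈ NCEvenPartitions n)
    {f : ∀ B ∈ π, Finset (Finset ℕ)} (hf : ∀ B h, f B h ∈ Conn B) {B : Finset ℕ} (hB : B ∈ π) :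
    ∃ C, C ∈ f B hB := by
  obtain ⟨x, hx⟩ := ((mem_NCE.1 hπ).2.1 B hB).1
  obtain ⟨C, hC, -⟩ := (mem_Conn.1 (hf B hB)).1.2 x hx
  exact ⟨C, hC.1⟩

lemma comps_glue {n : ℕ} {π : Finset (Finset ℕ)} (hπ : π ∈ NCEvenPartitions n)
    {f : ∀ B ∈ π, Finset (Finset ℕ)} (hf : ∀ B h, f B h ∈ Conn B) : comps (glue π f) = π := by
  ext V
  unfold comps
  rw [Finset.mem_image]
  constructor
  · rintro ⟨C, hC, rfl⟩
    obtain ⟨B, hB, hC⟩ := mem_glue.1 hC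
    rwa [supp_glue hπ hf hB hC]
  · intro hV
    obtain ⟨C, hC⟩ := exists_mem_f hπ hf hV
    exact ⟨C, mem_glue.2 ⟨V, hV, hC⟩, supp_glue hπ hf hV hC⟩

lemma fiber_card {n : ℕ} {π : Finset (Finset ℕ)} (hπ : π ∈ NCEvenPartitions n) :
    ((PRs (Finset.Icc 1 (2 * n))).filter (fun ρ => comps ρ = π)).card
      = ∏ B ∈ π, bTot (B.card / 2) := by
  rw [← Finset.prod_congr rfl (fun B hB => Conn_card hπ hB), ← Finset.card_pi]
  symm
  refine Finset.card_bij (fun f _ => glue π f) ?_ ?_ ?_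
  · intro f hf
    rw [Finset.mem_pi] at hf
    rw [Finset.mem_filter]
    exact ⟨glue_PRs hπ hf, comps_glue hπ hf⟩
  · intro f hf g hg hfg
    rw [Finset.mem_pi] at hf hg
    funext B hB
    obtain ⟨C, hC⟩ := exists_mem_f hπ hf hB
    have hC' : C ∈ glue π g := hfg ▸ mem_glue.2 ⟨B, hB, hC⟩
    obtain ⟨B', hB', hC'⟩ := mem_glue.1 hC'
    have e1 := supp_glue hπ hf hB hC
    have e2 := supp_glue hπ hg hB' hC'
    have hfg' : glue π f = glue π g := hfg
    rw [hfg', e2] at e1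
    subst e1
    rw [← compo_glue hπ hf hB hC, hfg', compo_glue hπ hg hB hC']
  · intro ρ hρ
    rw [Finset.mem_filter, mem_PRs] at hρ
    obtain ⟨⟨hp, hpr⟩, rfl⟩ := hρ
    refine ⟨fun B _ => ρ.filter (fun D => D ⊆ B), ?_, ?_⟩
    · rw [Finset.mem_pi]
      intro B hB
      obtain ⟨C, hC, rfl⟩ := Finset.mem_image.1 hB
      simp only [compo_eq_filter hp]
      exact compo_Conn hp hpr hC
    · ext D
      rw [mem_glue]
      simp only [Finset.mem_filter]
      constructor
      · rintro ⟨B, hB, h, -⟩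
        exact h
      · intro hD
        exact ⟨supp ρ D, Finset.mem_image_of_mem _ hD, hD, fun x hx =>
          mem_supp.2 ⟨D, hD, Relation.ReflTransGen.refl, hx⟩⟩

/-- Decomposition into connected components:
`n! = ∑_{π ∈ NC_even(2n)} ∏_{V ∈ π} b_{|V|/2}`. -/
theorem factorial_eq_sum_ncEven_prod_bTot (n : ℕ) (hn : 1 ≤ n) :
    Nat.factorial n = ∑ π ∈ NCEvenPartitions n, ∏ B ∈ π, bTot (B.card / 2) := by
  rw [← card_PRs n, Finset.card_eq_sum_card_fiberwise (f := comps) (t := NCEvenPartitions n)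
    (fun ρ hρ => comps_mem (mem_PRs.1 hρ).1)]
  exact Finset.sum_congr rfl (fun π hπ => fiber_card hπ)
end

section
/- For every odd n ≥ 1, every parity-reversing pairing on [2n] has at most C(n,2) = n(n−1)/2 crossings, and there is exactly one parity-reversing pairing on [2n] with exactly C(n,2) crossings; in particular r_{n,C(n,2)} = 1 and r_{n,k} = 0 for all k > C(n,2). -/
open scoped Classical

lemma pair_eq_aux {a b c d : ℕ} (h1 : a < b) (h2 : c < d) (h : ({a, b} : Finset ℕ) = {c, d}) :
    a = c ∧ b = d := by
  have ha : a ∈ ({c, d} : Finset ℕ) := h ▸ (by simp)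
  have hb : b ∈ ({c, d} : Finset ℕ) := h ▸ (by simp)
  have hc : c ∈ ({a, b} : Finset ℕ) := h ▸ (by simp)
  have hd : d ∈ ({a, b} : Finset ℕ) := h ▸ (by simp)
  simp only [Finset.mem_insert, Finset.mem_singleton] at ha hb hc hd
  omega

lemma crossAsym_iff {a b c d : ℕ} (h1 : a < b) (h2 : c < d) :
    CrossAsym {a, b} {c, d} ↔ a < c ∧ c < b ∧ b < d := by
  constructor
  · rintro ⟨a', b', c', d', x, y, z, e1, e2⟩
    obtain ⟨rfl, rfl⟩ := pair_eq_aux h1 (by omega) e1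
    obtain ⟨rfl, rfl⟩ := pair_eq_aux h2 (by omega) e2
    exact ⟨x, y, z⟩
  · rintro ⟨x, y, z⟩
    exact ⟨a, b, c, d, x, y, z, rfl, rfl⟩

lemma crossAsym_asymm {B C : Finset ℕ} (h : CrossAsym B C) : ¬ CrossAsym C B := by
  obtain ⟨a, b, c, d, x, y, z, rfl, rfl⟩ := h
  rw [crossAsym_iff (by omega) (by omega)]
  omega

lemma crossAsym_ne {B C : Finset ℕ} (h : CrossAsym B C) : B ≠ C := by
  rintro rfl
  exact crossAsym_asymm h h

lemma crNum_eq_card (π : Finset (Finset ℕ)) :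
    crNum π = (π.offDiag.filter (fun p => CrossAsym p.1 p.2)).card := by
  rw [crNum, ← Set.ncard_coe_finset]
  congr 1
  ext p
  simp only [Set.mem_ofPred_eq, Finset.coe_filter, Finset.mem_offDiag]
  constructor
  · rintro ⟨h1, h2, h3⟩
    exact ⟨⟨h1, h2, crossAsym_ne h3⟩, h3⟩
  · rintro ⟨⟨h1, h2, _⟩, h3⟩
    exact ⟨h1, h2, h3⟩

lemma crNum_add (π : Finset (Finset ℕ)) :
    2 * crNum π + (π.offDiag.filter (fun p => ¬ Crosses p.1 p.2)).card
      = π.card * π.card - π.card := by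
  rw [← Finset.offDiag_card, ← Finset.card_filter_add_card_filter_not (s := π.offDiag)
    (fun p => Crosses p.1 p.2)]
  congr 1
  have h1 : π.offDiag.filter (fun p => Crosses p.1 p.2)
      = π.offDiag.filter (fun p => CrossAsym p.1 p.2) ∪
        π.offDiag.filter (fun p => CrossAsym p.2 p.1) := by
    ext p; simp only [Finset.mem_filter, Finset.mem_union]; unfold Crosses; tauto
  have h2 : Disjoint (π.offDiag.filter (fun p => CrossAsym p.1 p.2))
        (π.offDiag.filter (fun p => CrossAsym p.2 p.1)) := by
    rw [Finset.disjoint_filter]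
    intro p _ h
    exact crossAsym_asymm h
  have h3 : (π.offDiag.filter (fun p => CrossAsym p.2 p.1)).card
      = (π.offDiag.filter (fun p => CrossAsym p.1 p.2)).card := by
    apply Finset.card_bij (fun p _ => p.swap)
    · intro p hp
      simp only [Finset.mem_filter, Finset.mem_offDiag, Prod.fst_swap, Prod.snd_swap] at hp ⊢
      exact ⟨⟨hp.1.2.1, hp.1.1, hp.1.2.2.symm⟩, hp.2⟩
    · intro p _ q _ h
      exact Prod.swap_injective h
    · intro p hp
      refine ⟨p.swap, ?_, by simp⟩
      simp only [Finset.mem_filter, Finset.mem_offDiag, Prod.fst_swap, Prod.snd_swap] at hp ⊢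
      exact ⟨⟨hp.1.2.1, hp.1.1, hp.1.2.2.symm⟩, hp.2⟩
  rw [h1, Finset.card_union_of_disjoint h2, h3, crNum_eq_card]
  ring

lemma two_choose (n : ℕ) : 2 * n.choose 2 = n * n - n := by
  rw [Nat.choose_two_right, Nat.mul_div_cancel' (Nat.even_mul_pred_self n).two_dvd,
    Nat.mul_sub_one]

lemma block_unique {n : ℕ} {π : Finset (Finset ℕ)} (h : IsPairing n π) {B C : Finset ℕ}
    (hB : B ∈ π) (hC : C ∈ π) {x : ℕ} (hxB : x ∈ B) (hxC : x ∈ C) : B = C := by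
  have hx := (h.1 B hB).2 hxB
  exact (h.2 x hx).unique ⟨hB, hxB⟩ ⟨hC, hxC⟩

lemma disj_blocks {n : ℕ} {π : Finset (Finset ℕ)} (h : IsPairing n π) :
    ∀ B ∈ π, ∀ C ∈ π, B ≠ C → Disjoint B C := by
  intro B hB C hC hne
  rw [Finset.disjoint_left]
  intro x hx hx'
  exact hne (block_unique h hB hC hx hx')

lemma card_inter_sum {n : ℕ} {π : Finset (Finset ℕ)} (h : IsPairing n π) (S : Finset ℕ)
    (hS : S ⊆ Finset.Icc 1 (2 * n)) : S.card = ∑ C ∈ π, (C ∩ S).card := by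
  rw [← Finset.card_biUnion]
  · congr 1
    ext x
    simp only [Finset.mem_biUnion, Finset.mem_inter]
    constructor
    · intro hx
      obtain ⟨B, hB, _⟩ := h.2 x (hS hx)
      exact ⟨B, hB.1, hB.2, hx⟩
    · rintro ⟨_, _, _, hx⟩
      exact hx
  · intro B hB C hC hne
    exact (disj_blocks h B hB C hC hne).mono Finset.inter_subset_left Finset.inter_subset_left

lemma card_pairing {n : ℕ} {π : Finset (Finset ℕ)} (h : IsPairing n π) : π.card = n := by
  have h1 := card_inter_sum h _ subset_rfl
  have h2 : ∑ C ∈ π, (C ∩ Finset.Icc 1 (2 * n)).card = ∑ C ∈ π, 2 := by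
    apply Finset.sum_congr rfl
    intro C hC
    rw [Finset.inter_eq_left.2 (h.1 C hC).2, (h.1 C hC).1]
  rw [h2] at h1
  simp at h1
  omega

lemma crNum_le {n : ℕ} {π : Finset (Finset ℕ)} (h : IsPairing n π) : crNum π ≤ n.choose 2 := by
  have h1 := crNum_add π
  rw [card_pairing h, ← two_choose] at h1
  omega

lemma crNum_eq_iff {n : ℕ} {π : Finset (Finset ℕ)} (h : IsPairing n π) :
    crNum π = n.choose 2 ↔ ∀ B ∈ π, ∀ C ∈ π, B ≠ C → Crosses B C := by
  have h1 := crNum_add π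
  rw [card_pairing h, ← two_choose] at h1
  have : crNum π = n.choose 2 ↔
      (π.offDiag.filter (fun p => ¬ Crosses p.1 p.2)).card = 0 := by omega
  rw [this, Finset.card_eq_zero, Finset.filter_eq_empty_iff]
  simp only [Finset.mem_offDiag, not_not, Prod.forall]
  constructor
  · intro H B hB C hC hne
    exact H B C ⟨hB, hC, hne⟩
  · rintro H B C ⟨hB, hC, hne⟩
    exact H B hB C hC hne

lemma inter_Ioo {a b : ℕ} (hab : a < b) {C : Finset ℕ} (h : Crosses {a, b} C) :
    (C ∩ Finset.Ioo a b).card = 1 := by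
  rw [Finset.card_eq_one]
  rcases h with ⟨a', b', c, d, x, y, z, e1, rfl⟩ | ⟨c, d, a', b', x, y, z, rfl, e1⟩
  · obtain ⟨rfl, rfl⟩ := pair_eq_aux hab (by omega) e1
    refine ⟨c, ?_⟩
    ext t
    simp only [Finset.mem_inter, Finset.mem_insert, Finset.mem_singleton, Finset.mem_Ioo]
    omega
  · obtain ⟨rfl, rfl⟩ := pair_eq_aux hab (by omega) e1
    refine ⟨d, ?_⟩
    ext t
    simp only [Finset.mem_inter, Finset.mem_insert, Finset.mem_singleton, Finset.mem_Ioo]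
    omega

lemma exists_pair {B : Finset ℕ} (h : B.card = 2) : ∃ a b, a < b ∧ B = {a, b} := by
  obtain ⟨x, y, hne, rfl⟩ := Finset.card_eq_two.1 h
  rcases lt_or_gt_of_ne hne with h | h
  · exact ⟨x, y, h, rfl⟩
  · exact ⟨y, x, h, Finset.pair_comm _ _⟩

lemma block_form {n : ℕ} {π : Finset (Finset ℕ)} (h : IsPairing n π)
    (hc : ∀ B ∈ π, ∀ C ∈ π, B ≠ C → Crosses B C) {a b : ℕ} (hab : a < b)
    (hB : {a, b} ∈ π) : b = a + n := by
  have hs := (h.1 _ hB).2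
  have ha := Finset.mem_Icc.1 (hs (show a ∈ ({a, b} : Finset ℕ) by simp))
  have hb := Finset.mem_Icc.1 (hs (show b ∈ ({a, b} : Finset ℕ) by simp))
  have h1 := card_inter_sum h (Finset.Ioo a b) (by
    intro x hx
    rw [Finset.mem_Ioo] at hx
    rw [Finset.mem_Icc]
    omega)
  rw [← Finset.add_sum_erase _ _ hB] at h1
  have h2 : ∑ C ∈ π.erase {a, b}, (C ∩ Finset.Ioo a b).card = ∑ C ∈ π.erase {a, b}, 1 := by
    apply Finset.sum_congr rfl
    intro C hC
    rw [Finset.mem_erase] at hC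
    exact inter_Ioo hab (hc _ hB _ hC.2 hC.1.symm)
  have h3 : (({a, b} : Finset ℕ) ∩ Finset.Ioo a b).card = 0 := by
    rw [Finset.card_eq_zero]
    ext t
    simp only [Finset.mem_inter, Finset.mem_insert, Finset.mem_singleton, Finset.mem_Ioo,
      Finset.notMem_empty, iff_false]
    omega
  rw [h2, h3, Finset.sum_const, Finset.card_erase_of_mem hB, card_pairing h, Nat.card_Ioo] at h1
  simp at h1
  omega

/-- The pairing `i ~ i + n`. -/
def maxP (n : ℕ) : Finset (Finset ℕ) := (Finset.Icc 1 n).image (fun i => {i, i + n})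

lemma mem_maxP {n : ℕ} {B : Finset ℕ} : B ∈ maxP n ↔ ∃ i, (1 ≤ i ∧ i ≤ n) ∧ {i, i + n} = B := by
  simp [maxP]

lemma maxP_pairing (n : ℕ) : IsPairing n (maxP n) := by
  constructor
  · intro B hB
    obtain ⟨i, hi, rfl⟩ := mem_maxP.1 hB
    constructor
    · rw [Finset.card_pair]
      omega
    · intro x hx
      simp only [Finset.mem_insert, Finset.mem_singleton] at hx
      rw [Finset.mem_Icc]
      omega
  · intro x hx
    rw [Finset.mem_Icc] at hx
    by_cases h : x ≤ n
    · refine ⟨{x, x + n}, ⟨mem_maxP.2 ⟨x, ⟨hx.1, h⟩, rfl⟩, by simp⟩, ?_⟩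
      rintro C ⟨hC, hxC⟩
      obtain ⟨i, hi, rfl⟩ := mem_maxP.1 hC
      simp only [Finset.mem_insert, Finset.mem_singleton] at hxC
      have : x = i := by omega
      rw [this]
    · refine ⟨{x - n, x - n + n}, ⟨mem_maxP.2 ⟨x - n, by omega, rfl⟩, ?_⟩, ?_⟩
      · simp only [Finset.mem_insert, Finset.mem_singleton]
        omega
      rintro C ⟨hC, hxC⟩
      obtain ⟨i, hi, rfl⟩ := mem_maxP.1 hC
      simp only [Finset.mem_insert, Finset.mem_singleton] at hxC
      have : x - n = i := by omega
      rw [this]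

lemma maxP_parity {n : ℕ} (hodd : Odd n) : ParityReversing (maxP n) := by
  intro B hB
  obtain ⟨i, hi, rfl⟩ := mem_maxP.1 hB
  rcases Nat.even_or_odd i with h | h
  · exact ⟨i + n, i, Finset.pair_comm _ _, h.add_odd hodd, h⟩
  · exact ⟨i, i + n, rfl, h, h.add_odd hodd⟩

lemma maxP_cross {n : ℕ} : ∀ B ∈ maxP n, ∀ C ∈ maxP n, B ≠ C → Crosses B C := by
  intro B hB C hC hne
  obtain ⟨i, hi, rfl⟩ := mem_maxP.1 hB
  obtain ⟨j, hj, rfl⟩ := mem_maxP.1 hC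
  rcases lt_trichotomy i j with h | h | h
  · exact Or.inl ((crossAsym_iff (by omega) (by omega)).2 (by omega))
  · subst h
    exact absurd rfl hne
  · exact Or.inr ((crossAsym_iff (by omega) (by omega)).2 (by omega))

lemma eq_maxP {n : ℕ} {π : Finset (Finset ℕ)} (h : IsPairing n π)
    (hc : crNum π = n.choose 2) : π = maxP n := by
  apply Finset.eq_of_subset_of_card_le
  · intro B hB
    obtain ⟨a, b, hab, rfl⟩ := exists_pair (h.1 B hB).1
    have hs := (h.1 _ hB).2
    have ha := Finset.mem_Icc.1 (hs (show a ∈ ({a, b} : Finset ℕ) by simp))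
    have hb := Finset.mem_Icc.1 (hs (show b ∈ ({a, b} : Finset ℕ) by simp))
    have := block_form h ((crNum_eq_iff h).1 hc) hab hB
    subst this
    exact mem_maxP.2 ⟨a, by omega, rfl⟩
  · rw [card_pairing h, card_pairing (maxP_pairing n)]

/-- For odd `n`, every parity-reversing pairing on `[2n]` has at most `C(n,2)` crossings,
exactly one such pairing attains `C(n,2)` crossings, and `r_{n,k} = 0` for `k > C(n,2)`. -/
theorem rCount_max_crossings_odd (n : ℕ) (hn : 1 ≤ n) (hodd : Odd n) :
    (∀ π : Finset (Finset ℕ), IsPairing n π → ParityReversing π → crNum π ≤ n.choose 2) ∧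
    rCount n (n.choose 2) = 1 ∧
    (∀ k : ℕ, n.choose 2 < k → rCount n k = 0) := by
  refine ⟨fun π h _ => crNum_le h, ?_, ?_⟩
  · rw [rCount, Set.ncard_eq_one]
    refine ⟨maxP n, ?_⟩
    ext π
    simp only [Set.mem_ofPred_eq, Set.mem_singleton_iff]
    constructor
    · rintro ⟨h, _, hc⟩
      exact eq_maxP h hc
    · rintro rfl
      exact ⟨maxP_pairing n, maxP_parity hodd, (crNum_eq_iff (maxP_pairing n)).2 maxP_cross⟩
  · intro k hk
    rw [rCount]
    convert Set.ncard_empty (Finset (Finset ℕ))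
    ext π
    simp only [Set.mem_ofPred_eq, Set.mem_empty_iff_false, iff_false]
    rintro ⟨h, _, hc⟩
    have := crNum_le h
    omega
end
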